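/- arXiv:2602.15170 — 4 statements merged into one kernel-verified Lean document; each statement's English description precedes it below -/
import Mathlib

section
/- Let K be a field and let X be a second countable compact Hausdorff totally disconnected topological space. Then every ideal I of the commutative ring LocallyConstant X K is countably generated: there exists a countable set S ⊆ LocallyConstant X K with Ideal.span S = I. -/
/-! For every `a` in a (von Neumann) regular ring, say with `a * b * a = a`, the idempotent `b * a`
generates the same left ideal as `a`. So an ideal is spanned by the idempotents it contains, and it
is enough to have countably many idempotents in the ring. Locally constant functions with values
in a field form a regular ring whose idempotents are the indicators of the clopen sets. -/

open TopologicalSpace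

theorem span_setOf_isIdempotentElem_mem {R : Type*} [Semiring R]
    (hR : ∀ a : R, ∃ b, a * b * a = a) (I : Ideal R) :
    Ideal.span {e | IsIdempotentElem e ∧ e ∈ I} = I := by
  refine le_antisymm (Ideal.span_le.mpr fun e he ↦ he.2) fun a ha ↦ ?_
  obtain ⟨b, hb⟩ := hR a
  have h_idem : IsIdempotentElem (b * a) := by
    rw [IsIdempotentElem, mul_assoc, ← mul_assoc a, hb]
  rw [← hb, mul_assoc]
  exact Ideal.mul_mem_left _ a (Ideal.subset_span ⟨h_idem, I.mul_mem_left b ha⟩)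

section LocallyConstant

variable {X K : Type*} [TopologicalSpace X]

theorem locallyConstant_mul_inv_mul_cancel [GroupWithZero K] (f : LocallyConstant X K) :
    f * f⁻¹ * f = f :=
  LocallyConstant.ext fun x ↦ mul_inv_mul_cancel (f x)

theorem exists_charFn_eq_of_isIdempotentElem [MonoidWithZero K] [IsLeftCancelMulZero K]
    {f : LocallyConstant X K} (hf : IsIdempotentElem f) :
    ∃ U : Clopens X, LocallyConstant.charFn K U.isClopen = f := by
  classical
  refine ⟨⟨{x | f x = 1}, f.isLocallyConstant.isClopen_fiber 1⟩, LocallyConstant.ext fun x ↦ ?_⟩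
  have hfx : f x = 0 ∨ f x = 1 :=
    IsIdempotentElem.iff_eq_zero_or_one.mp (LocallyConstant.congr_fun hf x)
  change Set.indicator {x | f x = 1} 1 x = f x
  rcases hfx with h | h <;> simp [Set.indicator_apply, h, eq_comm]

theorem countable_setOf_isIdempotentElem_locallyConstant [MonoidWithZero K] [IsLeftCancelMulZero K]
    [Countable (Clopens X)] : {f : LocallyConstant X K | IsIdempotentElem f}.Countable :=
  (Set.countable_range fun U : Clopens X ↦ LocallyConstant.charFn K U.isClopen).mono
    fun _ hf ↦ exists_charFn_eq_of_isIdempotentElem hf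

end LocallyConstant

theorem locallyConstant_ideal_countably_generated_general
    (K : Type*) [DivisionSemiring K] (X : Type*) [TopologicalSpace X] [Countable (Clopens X)]
    (I : Ideal (LocallyConstant X K)) :
    ∃ S : Set (LocallyConstant X K), S.Countable ∧ Ideal.span S = I :=
  ⟨{e | IsIdempotentElem e ∧ e ∈ I},
    countable_setOf_isIdempotentElem_locallyConstant.mono fun _ he ↦ he.1,
    span_setOf_isIdempotentElem_mem (fun f ↦ ⟨f⁻¹, locallyConstant_mul_inv_mul_cancel f⟩) I⟩

/-- For a field `K` and a second countable compact Hausdorff totally disconnected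
space `X`, every ideal of `LocallyConstant X K` is countably generated. -/
theorem locallyConstant_ideal_countably_generated
    (K : Type*) [Field K] (X : Type*) [TopologicalSpace X] [CompactSpace X]
    [T2Space X] [TotallyDisconnectedSpace X] [SecondCountableTopology X]
    (I : Ideal (LocallyConstant X K)) :
    ∃ S : Set (LocallyConstant X K), S.Countable ∧ Ideal.span S = I := by
  have : Countable (Clopens X) := Clopens.countable_iff_secondCountable.mpr inferInstance
  exact locallyConstant_ideal_countably_generated_general K X I
end

section
/- Let K be a field and let X be a second countable compact Hausdorff totally disconnected topological space, and set R := LocallyConstant X K. Then every ideal I of R is projective as an R-module (Module.Projective R I); that is, R is a hereditary ring. -/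
/-!
An ideal `I` of `LocallyConstant X K` is spanned by the characteristic functions it contains:
since `0⁻¹ = 0`, the function `a⁻¹ * a` is the characteristic function of the support of `a`. If `X`
has only countably many clopen sets, those whose characteristic function lies in `I` form a
sequence, and disjointing it does not change the span. So `I` is spanned by orthogonal idempotents
`e i`, and `a ↦ (a * e i)ᵢ` embeds such an ideal as a direct summand of a free module.
-/

section OrthogonalIdempotents

variable {R ι : Type*} [Semiring R] {e : ι → R}

theorem linearCombination_mul_of_orthogonalIdempotents (he : OrthogonalIdempotents e)
    (c : ι →₀ R) (i : ι) : Finsupp.linearCombination R e c * e i = c i * e i := by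
  classical
  simp +contextual [Finsupp.linearCombination_apply, Finsupp.sum_mul, mul_assoc, he.mul_eq]

theorem finite_support_mul_of_mem_span_range (he : OrthogonalIdempotents e) {a : R}
    (ha : a ∈ Ideal.span (Set.range e)) : (Function.support fun i ↦ a * e i).Finite := by
  obtain ⟨c, rfl⟩ := (Finsupp.range_linearCombination R).ge ha
  simp only [linearCombination_mul_of_orthogonalIdempotents he]
  exact c.hasFiniteSupport.subset (Function.support_mul_subset_left c e)

/-- The coordinates `(a * e i)ᵢ` of an element `a` of the left ideal spanned by orthogonal
idempotents `e i`. -/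
noncomputable def orthogonalCoordinates (he : OrthogonalIdempotents e) :
    Ideal.span (Set.range e) →ₗ[R] ι →₀ R where
  toFun a := .ofSupportFinite (fun i ↦ a * e i) (finite_support_mul_of_mem_span_range he a.2)
  map_add' a b := Finsupp.ext fun i ↦ add_mul (a : R) b (e i)
  map_smul' r a := Finsupp.ext fun i ↦ mul_assoc r (a : R) (e i)

theorem orthogonalCoordinates_apply (he : OrthogonalIdempotents e)
    (a : Ideal.span (Set.range e)) (i : ι) : orthogonalCoordinates he a i = a * e i :=
  rfl

theorem linearCombination_orthogonalCoordinates (he : OrthogonalIdempotents e)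
    (a : Ideal.span (Set.range e)) :
    Finsupp.linearCombination R e (orthogonalCoordinates he a) = a := by
  obtain ⟨c, hc⟩ := (Finsupp.range_linearCombination R).ge a.2
  have coord (i : ι) : orthogonalCoordinates he a i = c i * e i := by
    rw [orthogonalCoordinates_apply, ← hc, linearCombination_mul_of_orthogonalIdempotents he]
  have support_subset : (orthogonalCoordinates he a).support ⊆ c.support := fun i hi ↦ by
    rw [Finsupp.mem_support_iff, coord] at hi
    exact Finsupp.mem_support_iff.mpr (left_ne_zero_of_mul hi)
  calc Finsupp.linearCombination R e (orthogonalCoordinates he a)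
      = ∑ i ∈ c.support, orthogonalCoordinates he a i * e i :=
        Finsupp.sum_of_support_subset _ support_subset _ fun i _ ↦ zero_mul (e i)
    _ = ∑ i ∈ c.support, c i * e i := by simp only [coord, mul_assoc, (he.idem _).eq]
    _ = a := hc

theorem projective_span_range_of_orthogonalIdempotents (he : OrthogonalIdempotents e) :
    Module.Projective R (Ideal.span (Set.range e)) := by
  let generator (i : ι) : Ideal.span (Set.range e) := ⟨e i, Ideal.subset_span ⟨i, rfl⟩⟩
  refine .of_split (orthogonalCoordinates he) (Finsupp.linearCombination R generator) ?_
  ext a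
  exact (Finsupp.apply_linearCombination R (Submodule.subtype _) generator _).trans
    (linearCombination_orthogonalCoordinates he a)

end OrthogonalIdempotents

theorem forall_disjointed_mem_iff {B ι : Type*} [GeneralizedBooleanAlgebra B] [PartialOrder ι]
    [LocallyFiniteOrderBot ι] (J : Order.Ideal B) (U : ι → B) :
    (∀ i, disjointed U i ∈ J) ↔ ∀ i, U i ∈ J := by
  have partialSups_mem (V : ι → B) : (∀ i, partialSups V i ∈ J) ↔ ∀ i, V i ∈ J := by
    simp only [partialSups_iff_forall (· ∈ J) Order.Ideal.sup_mem_iff]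
    exact ⟨fun h i ↦ h i i le_rfl, fun h _ j _ ↦ h j⟩
  rw [← partialSups_mem, partialSups_disjointed, partialSups_mem]

section CharFn

open LocallyConstant TopologicalSpace

variable {X K : Type*} [TopologicalSpace X]

theorem charFn_empty [MulZeroOneClass K] :
    charFn K isClopen_empty = (0 : LocallyConstant X K) :=
  LocallyConstant.ext (congrFun (Set.indicator_empty 1))

theorem mul_charFn_of_support_subset [MulZeroOneClass K] {a : LocallyConstant X K} {U : Set X}
    (hU : IsClopen U) (h : Function.support a ⊆ U) : a * charFn K hU = a := by
  ext x
  by_cases hx : x ∈ U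
  · simp [coe_charFn, hx]
  · simp [coe_charFn, hx, Function.notMem_support.mp fun ha ↦ hx (h ha)]

theorem charFn_mul_charFn_of_disjoint [MulZeroOneClass K] {U V : Set X} (hU : IsClopen U)
    (hV : IsClopen V) (h : Disjoint U V) : charFn K hU * charFn K hV = 0 := by
  ext x
  simp [coe_charFn, ← Set.inter_indicator_mul, h.inter_eq]

theorem charFn_union_eq_add_charFn_sdiff [NonAssocSemiring K] {U V : Set X} (hU : IsClopen U)
    (hV : IsClopen V) : charFn K (hU.union hV) = charFn K hU + charFn K (hV.diff hU) := by
  ext x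
  by_cases hxU : x ∈ U <;> by_cases hxV : x ∈ V <;> simp [coe_charFn, hxU, hxV]

theorem orthogonalIdempotents_charFn [Semiring K] {ι : Type*} {U : ι → Clopens X}
    (hU : Pairwise (Function.onFun Disjoint U)) :
    OrthogonalIdempotents fun i ↦ charFn K (U i).isClopen where
  idem _ := mul_charFn_of_support_subset _ Set.support_indicator_subset
  ortho _ _ hij := charFn_mul_charFn_of_disjoint _ _ (Clopens.coe_disjoint.mpr (hU hij))

theorem isClopen_support [Zero K] (a : LocallyConstant X K) : IsClopen (Function.support a) :=
  (a.isLocallyConstant.isClopen_fiber 0).compl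

theorem inv_mul_self_eq_charFn_support [DivisionSemiring K] (a : LocallyConstant X K) :
    a⁻¹ * a = charFn K (isClopen_support a) := by
  ext x
  by_cases hx : a x = 0 <;> simp [coe_charFn, hx]

theorem charFn_empty_mem [Semiring K] (I : Ideal (LocallyConstant X K)) :
    charFn K isClopen_empty ∈ I := by
  rw [charFn_empty]
  exact I.zero_mem

theorem charFn_mem_of_subset [Semiring K] {I : Ideal (LocallyConstant X K)} {U V : Set X}
    (hU : IsClopen U) (hV : IsClopen V) (hVU : V ⊆ U) (h : charFn K hU ∈ I) :
    charFn K hV ∈ I := by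
  have hmul : charFn K hV * charFn K hU = charFn K hV :=
    mul_charFn_of_support_subset hU (Set.support_indicator_subset.trans hVU)
  exact hmul ▸ I.mul_mem_left _ h

theorem charFn_union_mem [Semiring K] {I : Ideal (LocallyConstant X K)} {U V : Set X}
    (hU : IsClopen U) (hV : IsClopen V) (hUI : charFn K hU ∈ I) (hVI : charFn K hV ∈ I) :
    charFn K (hU.union hV) ∈ I := by
  rw [charFn_union_eq_add_charFn_sdiff hU hV]
  exact I.add_mem hUI (charFn_mem_of_subset hV _ Set.sdiff_subset hVI)

/-- The clopen sets whose characteristic function lies in the left ideal `I`, as an ideal of the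
Boolean algebra of clopen sets. -/
def clopensOfIdeal [Semiring K] (I : Ideal (LocallyConstant X K)) : Order.Ideal (Clopens X) where
  carrier := {U | charFn K U.isClopen ∈ I}
  lower' U V hVU hU := charFn_mem_of_subset U.isClopen V.isClopen hVU hU
  nonempty' := ⟨⊥, charFn_empty_mem I⟩
  directed' U hU V hV :=
    ⟨U ⊔ V, charFn_union_mem U.isClopen V.isClopen hU hV, le_sup_left, le_sup_right⟩

theorem mem_clopensOfIdeal [Semiring K] {I : Ideal (LocallyConstant X K)} {U : Clopens X} :
    U ∈ clopensOfIdeal I ↔ charFn K U.isClopen ∈ I :=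
  Iff.rfl

theorem span_range_charFn_disjointed [Semiring K] {ι : Type*} [PartialOrder ι]
    [LocallyFiniteOrderBot ι] (U : ι → Clopens X) :
    Ideal.span (Set.range fun i ↦ charFn K (disjointed U i).isClopen) =
      Ideal.span (Set.range fun i ↦ charFn K (U i).isClopen) := by
  refine eq_of_forall_ge_iff fun I ↦ ?_
  simp only [Ideal.span_le, Set.range_subset_iff, SetLike.mem_coe, ← mem_clopensOfIdeal]
  exact forall_disjointed_mem_iff _ U

theorem span_charFn_clopensOfIdeal [DivisionSemiring K] (I : Ideal (LocallyConstant X K)) :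
    Ideal.span ((fun U : Clopens X ↦ charFn K U.isClopen) '' clopensOfIdeal I) = I := by
  refine le_antisymm (Ideal.span_le.mpr (Set.image_subset_iff.mpr fun _ hU ↦ hU)) fun a ha ↦ ?_
  have support_mem : charFn K (isClopen_support a) ∈ I :=
    inv_mul_self_eq_charFn_support a ▸ I.mul_mem_left a⁻¹ ha
  rw [← mul_charFn_of_support_subset (isClopen_support a) subset_rfl]
  exact Ideal.mul_mem_left _ a
    (Ideal.subset_span ⟨⟨Function.support a, isClopen_support a⟩, support_mem, rfl⟩)

theorem locallyConstant_hereditary_general [DivisionSemiring K] [Countable (Clopens X)]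
    (I : Ideal (LocallyConstant X K)) :
    Module.Projective (LocallyConstant X K) I := by
  obtain ⟨U, hU⟩ :=
    (clopensOfIdeal I : Set (Clopens X)).to_countable.exists_eq_range (clopensOfIdeal I).nonempty
  have span_disjointed :
      Ideal.span (Set.range fun n ↦ charFn K (disjointed U n).isClopen) = I := by
    rw [span_range_charFn_disjointed, ← span_charFn_clopensOfIdeal I, hU, ← Set.range_comp]
    rfl
  rw [← span_disjointed]
  exact projective_span_range_of_orthogonalIdempotents
    (orthogonalIdempotents_charFn (disjoint_disjointed U))

end CharFn

/-- For a field `K` and a second countable compact Hausdorff totally disconnected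
space `X`, the ring `LocallyConstant X K` is hereditary: every ideal is projective
as a module. -/
theorem locallyConstant_hereditary
    (K : Type*) [Field K] (X : Type*) [TopologicalSpace X] [CompactSpace X]
    [T2Space X] [TotallyDisconnectedSpace X] [SecondCountableTopology X]
    (I : Ideal (LocallyConstant X K)) :
    Module.Projective (LocallyConstant X K) I := by
  have := TopologicalSpace.Clopens.countable_iff_secondCountable (X := X).mpr inferInstance
  exact locallyConstant_hereditary_general I
end

section
/- Let θ be a semi-saturated partial action of the free group FreeGroup A on a set X, and write X_g := (θ g).target. For all u, v ∈ FreeGroup A one has (θ u) '' ((θ u).source ∩ (θ v).target) ⊆ (θ (u*v)).target; moreover, if |u * v| = |u| + |v|, then equality holds: (θ u) '' ((θ u).source ∩ (θ v).target) = (θ (u*v)).target. -/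
/-- A partial action of the free group `FreeGroup A` on a set `X`, given as a family
of partial bijections of `X`. -/
structure IsPartialAction {A X : Type*} (θ : FreeGroup A → PartialEquiv X X) : Prop where
  one : θ 1 = PartialEquiv.refl X
  inv : ∀ g : FreeGroup A, θ g⁻¹ = (θ g).symm
  compat : ∀ (g h : FreeGroup A) (x : X), x ∈ (θ h).source → θ h x ∈ (θ g).source →
    x ∈ (θ (g * h)).source ∧ θ (g * h) x = θ g (θ h x)

/-- A partial action of a free group is semi-saturated if `θ (u * v)` is the composite
of `θ v` followed by `θ u` whenever there is no cancellation in forming `u * v`. -/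
def IsSemiSaturated {A X : Type*} [DecidableEq A] (θ : FreeGroup A → PartialEquiv X X) : Prop :=
  ∀ u v : FreeGroup A,
    (FreeGroup.toWord (u * v)).length
      = (FreeGroup.toWord u).length + (FreeGroup.toWord v).length →
    θ (u * v) = (θ v).trans (θ u)

theorem target_subset_target_of_eqOn {α β : Type*} {e f : PartialEquiv α β}
    (hsource : e.source ⊆ f.source) (heq : Set.EqOn e f e.source) : e.target ⊆ f.target :=
  calc
    e.target = e '' e.source := e.image_source_eq_target.symm
    _ = f '' e.source := heq.image_eq
    _ ⊆ f '' f.source := Set.image_mono hsource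
    _ = f.target := f.image_source_eq_target

theorem trans_target_subset_target_mul {G X : Type*} [Mul G] {θ : G → PartialEquiv X X}
    (hcompat : ∀ (g h : G) (x : X), x ∈ (θ h).source → θ h x ∈ (θ g).source →
      x ∈ (θ (g * h)).source ∧ θ (g * h) x = θ g (θ h x))
    (u v : G) : ((θ v).trans (θ u)).target ⊆ (θ (u * v)).target :=
  target_subset_target_of_eqOn
    (fun x hx => (hcompat u v x hx.1 hx.2).1)
    (fun x hx => (hcompat u v x hx.1 hx.2).2.symm)

theorem image_source_inter_target_general {G X : Type*} [Mul G] (len : G → ℕ)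
    (θ : G → PartialEquiv X X)
    (hcompat : ∀ (g h : G) (x : X), x ∈ (θ h).source → θ h x ∈ (θ g).source →
      x ∈ (θ (g * h)).source ∧ θ (g * h) x = θ g (θ h x))
    (hsat : ∀ g h : G, len (g * h) = len g + len h → θ (g * h) = (θ h).trans (θ g))
    (u v : G) :
    (θ u) '' ((θ u).source ∩ (θ v).target) ⊆ (θ (u * v)).target ∧
      (len (u * v) = len u + len v →
        (θ u) '' ((θ u).source ∩ (θ v).target) = (θ (u * v)).target) := by
  have himage : (θ u) '' ((θ u).source ∩ (θ v).target) = ((θ v).trans (θ u)).target :=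
    ((θ v).trans_target'' (θ u)).symm
  rw [himage]
  refine ⟨trans_target_subset_target_mul hcompat u v, fun hlen => ?_⟩
  rw [hsat u v hlen]

/-- For a semi-saturated partial action of a free group,
`θ u (X_{u⁻¹} ∩ X_v) ⊆ X_{u v}`, with equality when there is no cancellation
in forming `u * v`. -/
theorem image_source_inter_target
    {A X : Type*} [DecidableEq A] (θ : FreeGroup A → PartialEquiv X X)
    (hpa : IsPartialAction θ) (hss : IsSemiSaturated θ)
    (u v : FreeGroup A) :
    (θ u) '' ((θ u).source ∩ (θ v).target) ⊆ (θ (u * v)).target ∧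
      ((FreeGroup.toWord (u * v)).length
          = (FreeGroup.toWord u).length + (FreeGroup.toWord v).length →
        (θ u) '' ((θ u).source ∩ (θ v).target) = (θ (u * v)).target) :=
  image_source_inter_target_general FreeGroup.norm θ hpa.compat hss u v
end

section
/- Let X be a compact Hausdorff totally disconnected topological space, let U ⊆ X be clopen, and let T : X → X be a function that is a local homeomorphism on U (IsLocalHomeomorphOn T U). Then there exist finitely many pairwise disjoint clopen subsets U_1, …, U_n of X whose union is U such that for each i, T is injective on U_i and the image T '' U_i is clopen in X. -/
/-!
Cover `U` by open sets on which `T` agrees with an open partial homeomorphism. Since `U` is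
profinite, this cover is refined by a finite partition into clopen sets. The image of each piece
is open because the piece is open, and closed because the piece is compact.
-/

open Function Set TopologicalSpace

theorem exists_clopen_partition_subordinate {X ι : Type*} [TopologicalSpace X] {U : Set X}
    [CompactSpace U] [T2Space U] [TotallyDisconnectedSpace U] (hU : IsClopen U)
    {W : ι → Set X} (hW : ∀ i, IsOpen (W i)) (hUW : U ⊆ ⋃ i, W i) :
    ∃ (n : ℕ) (V : Fin n → Set X),
      (∀ j, IsClopen (V j)) ∧ Pairwise (Disjoint on V) ∧ (⋃ j, V j) = U ∧
        ∀ j, ∃ i, V j ⊆ W i := by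
  have hW_univ : ⋃ i, ((↑) ⁻¹' W i : Set U) = univ := by
    rwa [← preimage_iUnion, preimage_eq_univ_iff, Subtype.range_coe]
  have hcover := IsOpenCover.of_sets (fun i => (hW i).preimage continuous_subtype_val) hW_univ
  obtain ⟨n, V, hVW, hV_univ, hV_disj⟩ := hcover.exists_finite_nonempty_disjoint_clopen_cover
  refine ⟨n, fun j => (↑) '' (V j : Set U), fun j => ?_, fun i j hij => ?_, ?_, fun j => ?_⟩
  · exact ⟨hU.isClosed.isClosedMap_subtype_val _ (V j).isClopen.isClosed,
      hU.isOpen.isOpenMap_subtype_val _ (V j).isClopen.isOpen⟩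
  · exact (disjoint_image_iff Subtype.val_injective).2 (Clopens.coe_disjoint.2 (hV_disj hij))
  · rw [← image_iUnion, univ_subset_iff.1 hV_univ, Subtype.coe_image_univ]
  · obtain ⟨i, hi⟩ := (hVW j).2
    exact ⟨i, image_subset_iff.2 hi⟩

theorem isClopen_image_of_isCompact_of_subset_source {X Y : Type*} [TopologicalSpace X]
    [TopologicalSpace Y] [T2Space Y] (e : OpenPartialHomeomorph X Y) {s : Set X}
    (hs_compact : IsCompact s) (hs_open : IsOpen s) (hs : s ⊆ e.source) : IsClopen (e '' s) :=
  ⟨(hs_compact.image_of_continuousOn (e.continuousOn.mono hs)).isClosed,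
    e.isOpen_image_of_subset_source hs_open hs⟩

theorem exists_clopen_partition_of_isLocalHomeomorphOn_general {X Y : Type*} [TopologicalSpace X]
    [TopologicalSpace Y] [T2Space Y] {U : Set X} [CompactSpace U] [T2Space U]
    [TotallyDisconnectedSpace U] (hU : IsClopen U) {T : X → Y} (hT : IsLocalHomeomorphOn T U) :
    ∃ (n : ℕ) (V : Fin n → Set X),
      (∀ i, IsClopen (V i)) ∧
      (Pairwise fun i j => Disjoint (V i) (V j)) ∧
      (⋃ i, V i) = U ∧
      (∀ i, InjOn T (V i) ∧ IsClopen (T '' V i)) := by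
  choose e hmem hTe using fun x : U => hT x x.2
  obtain ⟨n, V, hV, hV_disj, hV_union, hV_source⟩ :=
    exists_clopen_partition_subordinate hU (fun x => (e x).open_source)
      fun x hx => mem_iUnion_of_mem ⟨x, hx⟩ (hmem ⟨x, hx⟩)
  refine ⟨n, V, hV, hV_disj, hV_union, fun i => ?_⟩
  have hV_compact : IsCompact (V i) :=
    (isCompact_iff_compactSpace.2 ‹CompactSpace U›).of_isClosed_subset (hV i).isClosed
      (hV_union ▸ subset_iUnion V i)
  obtain ⟨x, hVx⟩ := hV_source i
  rw [hTe x]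
  exact ⟨(e x).injOn.mono hVx,
    isClopen_image_of_isCompact_of_subset_source (e x) hV_compact (hV i).isOpen hVx⟩

/-- If `X` is compact Hausdorff and totally disconnected, `U ⊆ X` is clopen, and
`T : X → X` is a local homeomorphism on `U`, then `U` can be partitioned into finitely
many pairwise disjoint clopen sets on each of which `T` is injective with clopen image. -/
theorem exists_clopen_partition_of_isLocalHomeomorphOn
    (X : Type*) [TopologicalSpace X] [CompactSpace X] [T2Space X]
    [TotallyDisconnectedSpace X]
    (U : Set X) (hU : IsClopen U) (T : X → X) (hT : IsLocalHomeomorphOn T U) :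
    ∃ (n : ℕ) (V : Fin n → Set X),
      (∀ i, IsClopen (V i)) ∧
      (Pairwise fun i j => Disjoint (V i) (V j)) ∧
      (⋃ i, V i) = U ∧
      (∀ i, Set.InjOn T (V i) ∧ IsClopen (T '' V i)) := by
  have : CompactSpace U := isCompact_iff_compactSpace.1 hU.isClosed.isCompact
  exact exists_clopen_partition_of_isLocalHomeomorphOn_general hU hT
end
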